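/- Let W be the set of cyclic words over the alphabet {X, Y}, i.e. equivalence classes of nonempty finite words in the two letters X, Y under cyclic rotation. For each integer d ≥ 1 and matrices A, B ∈ Mat_d(ℂ), define ev_{A,B} : W → ℂ by sending the class of a word s₁s₂⋯s_n to tr(M_{s₁}M_{s₂}⋯M_{s_n}), where M_X := A and M_Y := B (this is well defined by cyclic invariance of the trace). Let g be a commutative multivariate polynomial over ℂ whose variables are indexed by W. If for every d ≥ 1 and all A, B ∈ Mat_d(ℂ) the evaluation of g at the family (ev_{A,B}(w))_{w ∈ W} equals 0, then g = 0. -/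

import Mathlib

open Matrix

/-- Evaluation of a word in the letters `X = true`, `Y = false` at a pair of matrices,
as the trace of the corresponding product. -/
noncomputable def evList {d : ℕ} (A B : Matrix (Fin d) (Fin d) ℂ) (l : List Bool) : ℂ :=
  Matrix.trace (l.map fun b => if b then A else B).prod

theorem evList_rotate_one {d : ℕ} (A B : Matrix (Fin d) (Fin d) ℂ) (l : List Bool) :
    evList A B (l.rotate 1) = evList A B l := by
  cases l with
  | nil => simp
  | cons a xs =>
    simp only [evList, List.rotate_cons_succ, List.rotate_zero, List.map_append,
      List.map_cons, List.prod_append, List.prod_cons, List.map_nil, List.prod_nil, mul_one]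
    rw [Matrix.trace_mul_comm]

theorem evList_rotated {d : ℕ} (A B : Matrix (Fin d) (Fin d) ℂ) :
    ∀ l l' : List Bool, l ~r l' → evList A B l = evList A B l' := by
  intro l l' hll'
  obtain ⟨n, rfl⟩ := hll'
  induction n generalizing l with
  | zero => simp
  | succ k ih =>
    have : l.rotate (k + 1) = (l.rotate 1).rotate k := by
      rw [List.rotate_rotate, add_comm]
    rw [this, ← ih (l.rotate 1), evList_rotate_one]

/-- Evaluation of a cyclic word over `{X, Y}` at a pair of matrices (well defined by cyclic
invariance of the trace). -/
noncomputable def evCyc {d : ℕ} (A B : Matrix (Fin d) (Fin d) ℂ) (c : Cycle Bool) : ℂ :=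
  Quotient.liftOn c (evList A B) (evList_rotated A B)

/-!
Each cyclic word `c` gives a directed cycle with `c.length` vertices, whose edges are labelled by
the letters of `c` and weighted by scalars. Let `N b` be its weighted adjacency matrix restricted
to the edges labelled `b`. The trace of a word `s` at `N` is a sum over the closed walks that spell
`s`. A nonempty closed walk has length a multiple of `c.length`, so the trace vanishes on every
nonempty cyclic word no longer than `c` other than `c` itself, while on `c` it is a positive
integer times the product of the weights, hence arbitrary in characteristic zero. Traces add up
over block sums, so treating finitely many cyclic words by increasing length prescribes all their
traces at will, and a polynomial vanishing at all values over an infinite field is zero.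
-/

theorem exists_list_coe_eq {α : Type*} (c : Cycle α) : ∃ l : List α, (l : Cycle α) = c :=
  Quotient.exists_rep c

section Trace

variable {R m n : Type*} [AddCommMonoid R] [Fintype m] [Fintype n]

theorem trace_reindex_self (e : m ≃ n) (A : Matrix m m R) : (reindex e e A).trace = A.trace :=
  e.symm.sum_comp fun i => A i i

theorem trace_fromBlocks (A : Matrix m m R) (B : Matrix m n R) (C : Matrix n m R)
    (D : Matrix n n R) : (fromBlocks A B C D).trace = A.trace + D.trace :=
  Fintype.sum_sum_type _

end Trace

theorem list_prod_map_fromBlocks_diagonal {R α m n : Type*} [Semiring R] [Fintype m]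
    [DecidableEq m] [Fintype n] [DecidableEq n] (M : α → Matrix m m R) (N : α → Matrix n n R)
    (l : List α) :
    (l.map fun b => fromBlocks (M b) 0 0 (N b)).prod =
      fromBlocks (l.map M).prod 0 0 (l.map N).prod := by
  induction l with
  | nil => simp
  | cons b l ih => simp [ih, fromBlocks_multiply]

section CycleTrace

variable {R α m n : Type*} [CommSemiring R]
variable [Fintype m] [DecidableEq m] [Fintype n] [DecidableEq n]

theorem trace_list_prod_eq_of_isRotated {L L' : List (Matrix n n R)} (h : L ~r L') :
    L.prod.trace = L'.prod.trace := by
  obtain ⟨k, rfl⟩ := h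
  rw [List.rotate_eq_drop_append_take_mod, List.prod_append, trace_mul_comm, ← List.prod_append,
    List.take_append_drop]

/-- The trace of a cyclic word over the alphabet `α` at a family of matrices indexed by `α`; it
extends `evCyc` to arbitrary alphabets, coefficients and index types. -/
def cycleTrace (M : α → Matrix n n R) (c : Cycle α) : R :=
  Quotient.liftOn c (fun l => (l.map M).prod.trace)
    fun _ _ h => trace_list_prod_eq_of_isRotated (List.IsRotated.map h M)

theorem cycleTrace_coe (M : α → Matrix n n R) (l : List α) :
    cycleTrace M (l : Cycle α) = (l.map M).prod.trace :=
  rfl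

theorem cycleTrace_reindex (e : m ≃ n) (M : α → Matrix m m R) (c : Cycle α) :
    cycleTrace (fun b => reindex e e (M b)) c = cycleTrace M c := by
  obtain ⟨l, rfl⟩ := exists_list_coe_eq c
  have hprod : (l.map fun b => reindex e e (M b)).prod = reindex e e (l.map M).prod := by
    simpa only [List.map_map, coe_reindexAlgEquiv, Function.comp_def] using
      (map_list_prod (reindexAlgEquiv R R e) (l.map M)).symm
  rw [cycleTrace_coe, cycleTrace_coe, hprod, trace_reindex_self]

theorem cycleTrace_fromBlocks_diagonal (M : α → Matrix m m R) (N : α → Matrix n n R)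
    (c : Cycle α) :
    cycleTrace (fun b => fromBlocks (M b) 0 0 (N b)) c = cycleTrace M c + cycleTrace N c := by
  obtain ⟨l, rfl⟩ := exists_list_coe_eq c
  simp only [cycleTrace_coe, list_prod_map_fromBlocks_diagonal, trace_fromBlocks]

end CycleTrace

section TransitionMatrix

variable {R α ι : Type*} [DecidableEq α] [DecidableEq ι]

/-- The graph of a self-map `f` has one edge `i ⟶ f i` out of each vertex `i`; label it by `a i`
and weight it by `v i`. This is the weighted adjacency matrix of the edges labelled `b`. -/
def transitionMatrix [Zero R] (f : ι → ι) (a : ι → α) (v : ι → R) (b : α) : Matrix ι ι R :=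
  of fun i j => if f i = j ∧ a i = b then v i else 0

variable [Semiring R] [Fintype ι]

theorem transitionMatrix_mul_apply (f : ι → ι) (a : ι → α) (v : ι → R) (b : α)
    (P : Matrix ι ι R) (i j : ι) :
    (transitionMatrix f a v b * P) i j = if a i = b then v i * P (f i) j else 0 := by
  simp [mul_apply, transitionMatrix, ite_and]

theorem list_prod_map_transitionMatrix_apply (f : ι → ι) (a : ι → α) (v : ι → R) (s : List α)
    (i j : ι) :
    (s.map (transitionMatrix f a v)).prod i j =
      if f^[s.length] i = j ∧ (List.iterate f i s.length).map a = s then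
        ((List.iterate f i s.length).map v).prod else 0 := by
  induction s generalizing i with
  | nil => simp [one_apply]
  | cons b s ih =>
    rw [List.map_cons, List.prod_cons, transitionMatrix_mul_apply, ih, mul_ite, mul_zero,
      ← ite_and]
    simp [List.iterate, and_left_comm]

end TransitionMatrix

section CyclicMatrix

theorem val_iterate_finRotate {n : ℕ} (k : ℕ) (i : Fin n) :
    ((finRotate n)^[k] i : ℕ) = (i + k) % n := by
  have := i.neZero
  induction k with
  | zero => simp [Nat.mod_eq_of_lt i.isLt]
  | succ k ih =>
    rw [Function.iterate_succ_apply', finRotate_apply, Fin.val_add, ih, Fin.val_one',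
      ← Nat.add_mod, add_assoc]

theorem iterate_finRotate_eq_self_iff {n k : ℕ} {i : Fin n} :
    (finRotate n)^[k] i = i ↔ n ∣ k := by
  rw [Fin.ext_iff, val_iterate_finRotate, ← Nat.add_modEq_left_iff (a := i), Nat.ModEq,
    Nat.mod_eq_of_lt i.isLt]

theorem list_iterate_finRotate {n : ℕ} (i : Fin n) :
    List.iterate (finRotate n) i n = (List.finRange n).rotate i := by
  refine List.ext_getElem (by simp) fun k _ _ => Fin.ext ?_
  simp [val_iterate_finRotate, List.getElem_rotate, add_comm]

variable {R α : Type*} [DecidableEq α]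

/-- The transition matrices of the directed cycle that spells the word `l`, with edge weights
`v`. -/
def cyclicMatrix [Zero R] (l : List α) (v : Fin l.length → R) :
    α → Matrix (Fin l.length) (Fin l.length) R :=
  transitionMatrix (finRotate l.length) l.get v

theorem trace_list_prod_map_cyclicMatrix_of_not_dvd [Semiring R] (l : List α)
    (v : Fin l.length → R) {s : List α} (h : ¬ l.length ∣ s.length) :
    (s.map (cyclicMatrix l v)).prod.trace = 0 := by
  refine Finset.sum_eq_zero fun i _ => ?_
  rw [diag_apply, cyclicMatrix, list_prod_map_transitionMatrix_apply]
  exact if_neg fun hi => h (iterate_finRotate_eq_self_iff.mp hi.1)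

variable [CommSemiring R]

theorem trace_list_prod_map_cyclicMatrix_of_length_eq (l : List α) (v : Fin l.length → R)
    {s : List α} (h : s.length = l.length) :
    (s.map (cyclicMatrix l v)).prod.trace =
      (Finset.univ.filter fun i : Fin l.length => l.rotate i = s).card * ∏ i, v i := by
  have hdiag (i : Fin l.length) : (s.map (cyclicMatrix l v)).prod i i =
      if l.rotate i = s then ∏ i, v i else 0 := by
    have hprod : (((List.finRange l.length).map v).rotate i).prod = ∏ i, v i := by
      rw [(List.rotate_perm _ _).prod_eq, ← List.ofFn_eq_map, List.prod_ofFn]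
    have hclosed : (finRotate l.length)^[l.length] i = i :=
      iterate_finRotate_eq_self_iff.mpr dvd_rfl
    rw [cyclicMatrix, list_prod_map_transitionMatrix_apply, h, list_iterate_finRotate,
      List.map_rotate, List.map_rotate, ← List.ofFn_eq_map, List.ofFn_get, hprod]
    simp only [hclosed, true_and]
  simp only [trace, diag_apply, hdiag, ← Finset.sum_filter, Finset.sum_const, nsmul_eq_mul]

theorem cycleTrace_cyclicMatrix_eq_zero (l : List α) (v : Fin l.length → R) {c : Cycle α}
    (hnil : c ≠ Cycle.nil) (hne : c ≠ l) (hlen : c.length ≤ l.length) :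
    cycleTrace (cyclicMatrix l v) c = 0 := by
  obtain ⟨s, rfl⟩ := exists_list_coe_eq c
  rw [cycleTrace_coe]
  by_cases hdvd : l.length ∣ s.length
  · have hs : 0 < s.length := List.length_pos_iff.mpr fun h => hnil (by rw [h, Cycle.coe_nil])
    have hempty : (Finset.univ.filter fun i : Fin l.length => l.rotate i = s) = ∅ :=
      Finset.filter_eq_empty_iff.mpr fun i _ hi => hne (Cycle.coe_eq_coe.mpr (.symm ⟨i, hi⟩))
    rw [trace_list_prod_map_cyclicMatrix_of_length_eq l v
      (le_antisymm hlen (Nat.le_of_dvd hs hdvd)), hempty]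
    simp
  · exact trace_list_prod_map_cyclicMatrix_of_not_dvd l v hdvd

end CyclicMatrix

section Faithfulness

variable {K α : Type*} [Field K] [CharZero K]

theorem exists_cycleTrace_cyclicMatrix_eq [DecidableEq α] {l : List α} (hl : l ≠ []) (x : K) :
    ∃ v : Fin l.length → K, cycleTrace (cyclicMatrix l v) (l : Cycle α) = x := by
  let i₀ : Fin l.length := ⟨0, List.length_pos_iff.mpr hl⟩
  let r : ℕ := (Finset.univ.filter fun i : Fin l.length => l.rotate i = l).card
  have hr : (r : K) ≠ 0 :=
    Nat.cast_ne_zero.mpr (Finset.card_ne_zero_of_mem (a := i₀) (by simp [i₀]))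
  refine ⟨Pi.mulSingle i₀ (x / r), ?_⟩
  rw [cycleTrace_coe, trace_list_prod_map_cyclicMatrix_of_length_eq l _ rfl,
    Fintype.prod_pi_mulSingle']
  exact mul_div_cancel₀ x hr

theorem exists_cycleTrace_eq_on (S : Finset {c : Cycle α // c ≠ Cycle.nil})
    (y : {c : Cycle α // c ≠ Cycle.nil} → K) :
    ∃ d : ℕ, 1 ≤ d ∧ ∃ M : α → Matrix (Fin d) (Fin d) K, ∀ w ∈ S, cycleTrace M w.1 = y w := by
  classical
  induction S using Finset.induction_on_max_value
      (fun w : {c : Cycle α // c ≠ Cycle.nil} => w.1.length) with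
  | empty => exact ⟨1, le_rfl, 0, by simp⟩
  | insert w S hw hmax ih =>
    obtain ⟨d, hd, M, hM⟩ := ih
    obtain ⟨l, hlw⟩ := exists_list_coe_eq w.1
    have hl : l ≠ [] := fun h => w.2 (by rw [← hlw, h, Cycle.coe_nil])
    obtain ⟨v, hv⟩ := exists_cycleTrace_cyclicMatrix_eq hl (y w - cycleTrace M w.1)
    refine ⟨d + l.length, hd.trans (Nat.le_add_right _ _), fun b =>
      reindex finSumFinEquiv finSumFinEquiv (fromBlocks (M b) 0 0 (cyclicMatrix l v b)), ?_⟩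
    intro u hu
    rw [cycleTrace_reindex, cycleTrace_fromBlocks_diagonal]
    obtain rfl | hu := Finset.mem_insert.mp hu
    · rw [← hlw] at hv ⊢
      rw [hv, add_sub_cancel]
    · have hne : u.1 ≠ l := fun h => hw (Subtype.ext (h.trans hlw) ▸ hu)
      have hlen : u.1.length ≤ l.length := by
        simpa only [← hlw, Cycle.length_coe] using hmax u hu
      rw [hM u hu, cycleTrace_cyclicMatrix_eq_zero l v u.2 hne hlen, add_zero]

theorem trace_word_faithfulness_general
    (g : MvPolynomial {c : Cycle α // c ≠ Cycle.nil} K)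
    (hg : ∀ d : ℕ, 1 ≤ d → ∀ M : α → Matrix (Fin d) (Fin d) K,
      MvPolynomial.eval (fun w => cycleTrace M w.1) g = 0) :
    g = 0 := by
  refine MvPolynomial.funext fun y => ?_
  obtain ⟨d, hd, M, hM⟩ := exists_cycleTrace_eq_on g.vars y
  calc MvPolynomial.eval y g
      = MvPolynomial.eval (fun w => cycleTrace M w.1) g :=
        MvPolynomial.eval₂Hom_congr' rfl (fun w hw _ => (hM w hw).symm) rfl
    _ = MvPolynomial.eval y 0 := by rw [hg d hd M, map_zero]

end Faithfulness

theorem evCyc_eq_cycleTrace {d : ℕ} (A B : Matrix (Fin d) (Fin d) ℂ) (c : Cycle Bool) :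
    evCyc A B c = cycleTrace (fun b => if b then A else B) c := by
  obtain ⟨l, rfl⟩ := exists_list_coe_eq c
  rfl

/-- Lemma 5.5 (l.det): faithfulness of traces of words in two matrices. A commutative
polynomial over `ℂ` in variables indexed by nonempty cyclic words over `{X, Y}` that
vanishes under every evaluation `w ↦ tr(M_{s₁} ⋯ M_{s_n})` (for all sizes `d ≥ 1` and all
matrices `A, B`) is the zero polynomial. -/
theorem trace_word_faithfulness
    (g : MvPolynomial {c : Cycle Bool // c ≠ Cycle.nil} ℂ)
    (hg : ∀ d : ℕ, 1 ≤ d → ∀ A B : Matrix (Fin d) (Fin d) ℂ,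
      MvPolynomial.eval (fun w => evCyc A B w.1) g = 0) :
    g = 0 := by
  refine trace_word_faithfulness_general g fun d hd M => ?_
  rw [← hg d hd (M true) (M false)]
  have hM : M = fun b => if b then M true else M false := by ext b; cases b <;> rfl
  simp only [evCyc_eq_cycleTrace, ← hM]
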